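/- arXiv:cs/0011015 — 2 statements merged into one kernel-verified Lean document; each statement's English description precedes it below -/
import Mathlib

section
/- (Decomposition theorem) Let G be a bipartite graph with positive integer edge weights, with maximum edge weight N, and let h ∈ [1, N]. Let G_h be the graph on the edges uv of G with w(u,v) ≥ N−h+1, with weights w(u,v)−(N−h). Let C_h be a minimum weight cover of G_h, and let G^Δ_h be the graph on those edges uv of G with w(u,v) − C_h(u) − C_h(v) > 0, with weights w(u,v) − C_h(u) − C_h(v) (where C_h(u) = 0 for nodes not in G_h). Then mwm(G) = mwm(G_h) + mwm(G^Δ_h), where mwm denotes the maximum weight of a matching. -/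
open Finset

variable {V : Type*} [Fintype V] [DecidableEq V]

/-- `C` is a (weighted vertex) cover of the bipartite graph on parts `X`, `Y`
with edge weights `w` (where `w x y = 0` means no edge). -/
def IsCover (X Y : Finset V) (w : V → V → ℕ) (C : V → ℕ) : Prop :=
  ∀ x ∈ X, ∀ y ∈ Y, w x y ≤ C x + C y

/-- The weight of a cover: the sum of its values over all nodes. -/
def coverWt (X Y : Finset V) (C : V → ℕ) : ℕ := ∑ u ∈ X ∪ Y, C u

/-- `M` is a matching of the weighted bipartite graph: a set of pairwise
node-disjoint edges, each going from `X` to `Y` with positive weight. -/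
def IsBMatching (X Y : Finset V) (w : V → V → ℕ) (M : Finset (V × V)) : Prop :=
  (∀ e ∈ M, e.1 ∈ X ∧ e.2 ∈ Y ∧ 0 < w e.1 e.2) ∧
  (∀ e ∈ M, ∀ f ∈ M, e ≠ f → e.1 ≠ f.1 ∧ e.2 ≠ f.2)

/-- The total weight of a matching. -/
def mWt (w : V → V → ℕ) (M : Finset (V × V)) : ℕ := ∑ e ∈ M, w e.1 e.2

open Classical in
/-- The maximum weight of a matching of the bipartite graph `(X, Y, w)`. -/
noncomputable def mwm (X Y : Finset V) (w : V → V → ℕ) : ℕ :=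
  Finset.sup ((Finset.univ : Finset (V × V)).powerset.filter fun M => IsBMatching X Y w M)
    fun M => mWt w M

/-- The minimum weight of a cover of the bipartite graph `(X, Y, w)`. -/
noncomputable def mwc (X Y : Finset V) (w : V → V → ℕ) : ℕ :=
  sInf {n : ℕ | ∃ C : V → ℕ, IsCover X Y w C ∧ coverWt X Y C = n}

omit [Fintype V] in
/-- Weak duality: the weight of a matching is at most the weight of a cover. -/
lemma mWt_le_coverWt {X Y : Finset V} (hXY : Disjoint X Y) {w : V → V → ℕ} {C : V → ℕ}
    {M : Finset (V × V)} (hM : IsBMatching X Y w M) (hC : IsCover X Y w C) :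
    mWt w M ≤ coverWt X Y C := by
  obtain ⟨hedge, hdisj⟩ := hM
  have hfst : Set.InjOn Prod.fst (M : Set (V × V)) := fun e he f hf hef => by
    by_contra hne
    exact (hdisj e he f hf hne).1 hef
  have hsnd : Set.InjOn Prod.snd (M : Set (V × V)) := fun e he f hf hef => by
    by_contra hne
    exact (hdisj e he f hf hne).2 hef
  calc mWt w M ≤ ∑ e ∈ M, (C e.1 + C e.2) :=
        sum_le_sum fun e he => hC _ (hedge e he).1 _ (hedge e he).2.1
    _ = ∑ x ∈ M.image Prod.fst, C x + ∑ y ∈ M.image Prod.snd, C y := by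
        rw [sum_add_distrib, sum_image hfst, sum_image hsnd]
    _ ≤ ∑ x ∈ X, C x + ∑ y ∈ Y, C y := by
        gcongr
        · exact image_subset_iff.2 fun e he => (hedge e he).1
        · exact image_subset_iff.2 fun e he => (hedge e he).2.1
    _ = coverWt X Y C := (sum_union hXY).symm

/-- A matching and a cover of equal weight are both optimal, and that weight is `mwm`. -/
lemma mwm_eq_coverWt {X Y : Finset V} (hXY : Disjoint X Y) {w : V → V → ℕ} {C : V → ℕ}
    {M : Finset (V × V)} (hM : IsBMatching X Y w M) (hC : IsCover X Y w C)
    (hMC : mWt w M = coverWt X Y C) : mwm X Y w = coverWt X Y C := by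
  classical
  refine le_antisymm (Finset.sup_le fun M' hM' => ?_) ?_
  · exact mWt_le_coverWt hXY (mem_filter.1 hM').2 hC
  · rw [← hMC]
    exact Finset.le_sup (f := fun M => mWt w M) (by simpa using hM)

lemma mwm_le_coverWt {X Y : Finset V} (hXY : Disjoint X Y) {w : V → V → ℕ} {C : V → ℕ}
    (hC : IsCover X Y w C) : mwm X Y w ≤ coverWt X Y C := by
  classical
  exact Finset.sup_le fun M' hM' => mWt_le_coverWt hXY (mem_filter.1 hM').2 hC

omit [Fintype V] in
/-- Exchange between a cover `C` of `w` and a minimum cover `D` of `w - K`: the values of `C` on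
`X` can be raised above those of `D` without increasing the weight, lowering the values on `Y` no
further than `D`. -/
lemma exists_cover_ge_left {X Y : Finset V} (hXY : Disjoint X Y) {w : V → V → ℕ} {K : ℕ}
    {C D : V → ℕ} (hC : IsCover X Y w C) (hD : IsCover X Y (fun x y => w x y - K) D)
    (hDmin : ∀ D' : V → ℕ, IsCover X Y (fun x y => w x y - K) D' →
      coverWt X Y D ≤ coverWt X Y D') :
    ∃ C' : V → ℕ, IsCover X Y w C' ∧ coverWt X Y C' ≤ coverWt X Y C ∧
      (∀ x ∈ X, D x ≤ C' x) ∧ ∀ y ∈ Y, min (C y) (D y) ≤ C' y := by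
  have hY : ∀ y ∈ Y, y ∉ X := fun y hy hx => disjoint_left.1 hXY hx hy
  let C' : V → ℕ := fun u => if u ∈ X then max (C u) (D u) else min (C u) (D u + K)
  let D' : V → ℕ := fun u => if u ∈ X then min (C u) (D u) else max (C u - K) (D u)
  have hC' : IsCover X Y w C' := fun x hx y hy => by
    have hCxy := hC x hx y hy
    have hDxy := hD x hx y hy
    simp only [C', if_pos hx, if_neg (hY y hy)] at hDxy ⊢
    omega
  have hD' : IsCover X Y (fun x y => w x y - K) D' := fun x hx y hy => by
    have hCxy := hC x hx y hy
    have hDxy := hD x hx y hy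
    simp only [D', if_pos hx, if_neg (hY y hy)] at hDxy ⊢
    omega
  have hsum : coverWt X Y C' + coverWt X Y D' = coverWt X Y C + coverWt X Y D := by
    simp only [coverWt, ← sum_add_distrib]
    refine sum_congr rfl fun u _ => ?_
    simp only [C', D']
    split_ifs <;> omega
  refine ⟨C', hC', ?_, fun x hx => ?_, fun y hy => ?_⟩
  · have := hDmin D' hD'
    omega
  · simp only [C', if_pos hx]
    omega
  · simp only [C', if_neg (hY y hy)]
    omega

omit [Fintype V] [DecidableEq V] in
lemma IsCover.swap {X Y : Finset V} {w : V → V → ℕ} {C : V → ℕ} (hC : IsCover X Y w C) :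
    IsCover Y X (fun y x => w x y) C := fun y hy x hx => by
  rw [add_comm]
  exact hC x hx y hy

omit [Fintype V] in
lemma coverWt_swap (X Y : Finset V) (C : V → ℕ) : coverWt X Y C = coverWt Y X C := by
  rw [coverWt, coverWt, union_comm]

omit [Fintype V] in
/-- Every cover of `w` can be replaced by one of no larger weight that dominates a given minimum
cover of `w - K`. -/
lemma exists_cover_ge {X Y : Finset V} (hXY : Disjoint X Y) {w : V → V → ℕ} {K : ℕ}
    {C D : V → ℕ} (hC : IsCover X Y w C) (hD : IsCover X Y (fun x y => w x y - K) D)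
    (hDmin : ∀ D' : V → ℕ, IsCover X Y (fun x y => w x y - K) D' →
      coverWt X Y D ≤ coverWt X Y D') :
    ∃ C' : V → ℕ, IsCover X Y w C' ∧ coverWt X Y C' ≤ coverWt X Y C ∧
      ∀ u ∈ X ∪ Y, D u ≤ C' u := by
  obtain ⟨C₁, hC₁, hle₁, hX₁, -⟩ := exists_cover_ge_left hXY hC hD hDmin
  obtain ⟨C₂, hC₂, hle₂, hY₂, hX₂⟩ := exists_cover_ge_left hXY.symm hC₁.swap hD.swap
    fun D' hD' => by
      rw [coverWt_swap Y X, coverWt_swap Y X]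
      exact hDmin D' hD'.swap
  rw [coverWt_swap Y X, coverWt_swap Y X] at hle₂
  refine ⟨C₂, hC₂.swap, hle₂.trans hle₁, fun u hu => ?_⟩
  rcases mem_union.1 hu with hx | hy
  · exact (le_min (hX₁ u hx) le_rfl).trans (hX₂ u hx)
  · exact hY₂ u hy

/-- The decomposition theorem: `mwm(G) = mwm(G_h) + mwm(G_h^Δ)`, where `G_h`
consists of the edges of weight at least `N - h + 1` (reduced by `N - h`),
`C_h` is a minimum weight cover of `G_h`, and `G_h^Δ` is the residual graph
with weights `w(u,v) - C_h(u) - C_h(v)` (truncated at 0). -/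
theorem decomposition
    (X Y : Finset V) (hXY : Disjoint X Y) (w : V → V → ℕ) (N h : ℕ)
    (hwN : ∀ x ∈ X, ∀ y ∈ Y, w x y ≤ N) (hNmax : ∃ x ∈ X, ∃ y ∈ Y, w x y = N)
    (h1 : 1 ≤ h) (hN : h ≤ N)
    (Ch : V → ℕ)
    (hCh : IsCover X Y (fun x y => w x y - (N - h)) Ch)
    (hChmin : ∀ C' : V → ℕ, IsCover X Y (fun x y => w x y - (N - h)) C' →
      coverWt X Y Ch ≤ coverWt X Y C')
    (hKE : ∀ w' : V → V → ℕ, ∃ (C : V → ℕ) (M : Finset (V × V)),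
      IsCover X Y w' C ∧ IsBMatching X Y w' M ∧ mWt w' M = coverWt X Y C) :
    mwm X Y w =
      mwm X Y (fun x y => w x y - (N - h)) +
      mwm X Y (fun x y => w x y - Ch x - Ch y) := by
  obtain ⟨C, M, hC, hM, hMC⟩ := hKE w
  obtain ⟨D, P, hD, hP, hPD⟩ := hKE fun x y => w x y - (N - h)
  obtain ⟨R, Q, hR, hQ, hQR⟩ := hKE fun x y => w x y - Ch x - Ch y
  have hD_eq : coverWt X Y D = coverWt X Y Ch :=
    le_antisymm (hPD ▸ mWt_le_coverWt hXY hP hCh) (hChmin D hD)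
  rw [mwm_eq_coverWt hXY hP hD hPD, hD_eq]
  refine le_antisymm ?_ ?_
  · have hsum : IsCover X Y w (fun u => Ch u + R u) := fun x hx y hy => by
      have hRxy := hR x hx y hy
      dsimp only at hRxy ⊢
      omega
    rw [mwm_eq_coverWt hXY hQ hR hQR]
    exact (mwm_le_coverWt hXY hsum).trans_eq sum_add_distrib
  · obtain ⟨C', hC', hle, hge⟩ := exists_cover_ge hXY hC hCh hChmin
    have hdiff : IsCover X Y (fun x y => w x y - Ch x - Ch y) (fun u => C' u - Ch u) :=
      fun x hx y hy => by
        have hCxy := hC' x hx y hy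
        have hxge := hge x (mem_union_left Y hx)
        have hyge := hge y (mem_union_right X hy)
        dsimp only
        omega
    calc coverWt X Y Ch + mwm X Y (fun x y => w x y - Ch x - Ch y)
        ≤ coverWt X Y Ch + coverWt X Y (fun u => C' u - Ch u) := by
          gcongr
          exact mwm_le_coverWt hXY hdiff
      _ = coverWt X Y C' := by
          simp only [coverWt, ← sum_add_distrib]
          exact sum_congr rfl fun u hu => Nat.add_sub_cancel' (hge u hu)
      _ ≤ coverWt X Y C := hle
      _ = mwm X Y w := (mwm_eq_coverWt hXY hM hC hMC).symm
end

section
/- Let M be a maximum weight matching of G, u a node of G with copies u^1,…,u^β in φ(G), and for each i let ρ(u^i) = 0 if there is an even-length alternating path for φ(M) starting at u^i and ρ(u^i) = 1 otherwise. Then Σ_{1≤i≤β} ρ(u^i) = mwm(G) − mwm(G − {u}), where G − {u} is G with node u and its incident edges deleted. -/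
open Finset

variable {V : Type*} [Fintype V] [DecidableEq V]

/-- Adjacency in the unfolded graph `φ(G)`: the copies `u^i` of a node `u` are the
pairs `(u, i)` with `i ≥ 1`, and for each edge `uv` of weight `β = w u v` the
unfolded graph has the (unweighted) edges `u^i v^{β+1-i}` for `1 ≤ i ≤ β`. -/
def phiAdj (X Y : Finset V) (w : V → V → ℕ) (a b : V × ℕ) : Prop :=
  (a.1 ∈ X ∧ b.1 ∈ Y ∧ 1 ≤ a.2 ∧ 1 ≤ b.2 ∧ 0 < w a.1 b.1 ∧ a.2 + b.2 = w a.1 b.1 + 1) ∨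
  (b.1 ∈ X ∧ a.1 ∈ Y ∧ 1 ≤ b.2 ∧ 1 ≤ a.2 ∧ 0 < w b.1 a.1 ∧ b.2 + a.2 = w b.1 a.1 + 1)

/-- `M` is a matching (set of pairwise node-disjoint edges) of the unweighted
graph with adjacency relation `adj`. -/
def IsUMatching {α : Type*} (adj : α → α → Prop) (M : Finset (α × α)) : Prop :=
  (∀ e ∈ M, adj e.1 e.2) ∧ (∀ e ∈ M, e.1 ≠ e.2) ∧
  (∀ e ∈ M, ∀ f ∈ M, e ≠ f →
    e.1 ≠ f.1 ∧ e.1 ≠ f.2 ∧ e.2 ≠ f.1 ∧ e.2 ≠ f.2)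

/-- The unfolding `φ(M)` of a matching `M` of `G`: each edge `uv ∈ M` of weight
`β` contributes the edges `u^1 v^β, …, u^β v^1`. -/
def phiM (w : V → V → ℕ) (M : Finset (V × V)) : Finset ((V × ℕ) × (V × ℕ)) :=
  M.biUnion fun e =>
    (Finset.Icc 1 (w e.1 e.2)).image fun i => ((e.1, i), (e.2, w e.1 e.2 + 1 - i))

/-- The number of copies of a node `u` in the unfolded graph: the maximum weight
of an edge incident to `u`. -/
def alphaCopies (X Y : Finset V) (w : V → V → ℕ) (u : V) : ℕ :=
  (X ∪ Y).sup fun v => max (w u v) (w v u)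

/-- The (undirected) edge `ab` belongs to the matching `M`. -/
def inMatch {α : Type*} (M : Finset (α × α)) (a b : α) : Prop :=
  (a, b) ∈ M ∨ (b, a) ∈ M

/-- The node `a` is matched by the matching `M`. -/
def matchedBy {α : Type*} (M : Finset (α × α)) (a : α) : Prop :=
  ∃ e ∈ M, e.1 = a ∨ e.2 = a

/-- `p` is an alternating path for the matching `M` in the graph with adjacency
relation `adj`: a nonempty simple path whose edges alternate between `M` and its
complement (edge `i` is in `M` iff `i % 2 = r`, for a fixed phase `r`), and which
contains the matched edge of each of its endpoints that is matched by `M`.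
In particular a zero-length path consists of a single unmatched node. -/
def IsAltPath {α : Type*} (adj : α → α → Prop) (M : Finset (α × α))
    (p : List α) : Prop :=
  p ≠ [] ∧ p.Nodup ∧ List.Chain' adj p ∧
  ∃ r : ℕ,
    (∀ i, ∀ h : i + 1 < p.length,
      (inMatch M (p.get ⟨i, Nat.lt_of_succ_lt h⟩) (p.get ⟨i + 1, h⟩) ↔ i % 2 = r)) ∧
    (∀ h : p ≠ [], matchedBy M (p.head h) → 1 < p.length ∧ r = 0) ∧
    (∀ h : p ≠ [], matchedBy M (p.getLast h) → 1 < p.length ∧ (p.length - 2) % 2 = r)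

/-- There is an even-length (possibly zero-length) alternating path for `M`
starting at `a`.  (A path on `k` nodes has `k - 1` edges, so even length means
an odd number of nodes.) -/
def EvenAltFrom {α : Type*} (adj : α → α → Prop) (M : Finset (α × α))
    (a : α) : Prop :=
  ∃ p : List α, IsAltPath adj M p ∧ p.length % 2 = 1 ∧ ∃ h : p ≠ [], p.head h = a

set_option linter.unusedSectionVars false

section AlternatingPaths

variable {α : Type*} {adj : α → α → Prop} {N : Finset (α × α)}

lemma inMatch.symm {a b : α} (h : inMatch N a b) : inMatch N b a := Or.symm h

lemma matchedBy_iff_exists_inMatch {a : α} : matchedBy N a ↔ ∃ b, inMatch N a b := by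
  constructor
  · rintro ⟨⟨x, y⟩, he, rfl | rfl⟩
    · exact ⟨y, Or.inl he⟩
    · exact ⟨x, Or.inr he⟩
  · rintro ⟨b, h | h⟩
    · exact ⟨_, h, Or.inl rfl⟩
    · exact ⟨_, h, Or.inr rfl⟩

/-- An alternating path of even length whose edges in even position are matched and whose last
node is unmatched. -/
structure IsEvenAlt (adj : α → α → Prop) (N : Finset (α × α)) (p : List α) : Prop where
  ne_nil : p ≠ []
  nodup : p.Nodup
  adj_succ : ∀ i, ∀ h : i + 1 < p.length, adj p[i] p[i + 1]
  odd_length : p.length % 2 = 1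
  inMatch_iff : ∀ i, ∀ h : i + 1 < p.length, inMatch N p[i] p[i + 1] ↔ i % 2 = 0
  last_unmatched : ¬ matchedBy N (p.getLast ne_nil)

lemma evenAltFrom_iff {a : α} :
    EvenAltFrom adj N a ↔ ∃ p, IsEvenAlt adj N p ∧ ∃ h : p ≠ [], p.head h = a := by
  constructor
  · rintro ⟨p, ⟨hne, hnd, hch, r, hr, hhead, hlast⟩, hodd, h, rfl⟩
    by_cases hm : matchedBy N (p.head h)
    · obtain ⟨hlen, rfl⟩ := hhead h hm
      refine ⟨p, ⟨hne, hnd, fun i hi => List.isChain_iff_getElem.1 hch i hi, hodd, hr, ?_⟩,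
        h, rfl⟩
      intro hl
      have := (hlast h hl).2
      omega
    · exact ⟨[p.head h], ⟨by simp, by simp, by simp, by simp, by simp, by simpa using hm⟩,
        by simp, by simp⟩
  · rintro ⟨p, hp, h, rfl⟩
    refine ⟨p, ⟨hp.ne_nil, hp.nodup, List.isChain_iff_getElem.2 hp.adj_succ, 0, hp.inMatch_iff,
      fun h hm => ⟨?_, rfl⟩, fun h hm => (hp.last_unmatched hm).elim⟩, hp.odd_length, h, rfl⟩
    by_contra hlen
    have hodd := hp.odd_length
    obtain ⟨a, rfl⟩ := List.length_eq_one_iff.1 (show p.length = 1 by omega)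
    exact hp.last_unmatched (by simpa using hm)

lemma evenAltFrom_of_not_matchedBy {a : α} (h : ¬ matchedBy N a) : EvenAltFrom adj N a :=
  evenAltFrom_iff.2 ⟨[a], ⟨by simp, by simp, by simp, by simp, by simp, by simpa using h⟩,
    by simp, by simp⟩

/-- No even-length alternating path starts at a node of a vertex cover all of whose nodes are
matched, and which contains at most one end of each matched edge. -/
lemma not_evenAltFrom_of_cover {D : α → Prop} (hcov : ∀ a b, adj a b → D a ∨ D b)
    (hone : ∀ a b, inMatch N a b → D a → ¬ D b) (hmat : ∀ a, D a → matchedBy N a)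
    {a : α} (ha : D a) : ¬ EvenAltFrom adj N a := by
  rw [evenAltFrom_iff]
  rintro ⟨p, hp, h, rfl⟩
  have key : ∀ k, ∀ hk : 2 * k < p.length, D p[2 * k] := by
    intro k
    induction k with
    | zero => intro hk; simpa [List.head_eq_getElem] using ha
    | succ k ih =>
      intro hk
      have h0 := ih (by omega)
      have h1 := hone _ _ ((hp.inMatch_iff (2 * k) (by omega)).2 (by omega)) h0
      exact (hcov _ _ (hp.adj_succ (2 * k + 1) (by omega))).resolve_left h1
  have hodd := hp.odd_length
  have hl := key ((p.length - 1) / 2) (by omega)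
  apply hp.last_unmatched
  rw [List.getLast_eq_getElem]
  convert hmat _ hl using 2
  omega

lemma IsEvenAlt.drop {p : List α} (hp : IsEvenAlt adj N p) {k : ℕ} (hk : k < p.length)
    (hk2 : k % 2 = 0) : IsEvenAlt adj N (p.drop k) where
  ne_nil := by simpa using hk
  nodup := hp.nodup.sublist (List.drop_sublist _ _)
  adj_succ i hi := by
    simp only [List.length_drop] at hi
    simpa [add_assoc] using hp.adj_succ (k + i) (by omega)
  odd_length := by
    have := hp.odd_length
    simp only [List.length_drop]
    omega
  inMatch_iff i hi := by
    simp only [List.length_drop] at hi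
    have := hp.inMatch_iff (k + i) (by omega)
    simp only [List.getElem_drop, ← add_assoc]
    rw [this]
    omega
  last_unmatched := by
    rw [List.getLast_drop]
    exact hp.last_unmatched

lemma IsEvenAlt.side_getElem {S : α → Prop} (hS : ∀ a b, adj a b → (S a ↔ ¬ S b))
    {p : List α} (hp : IsEvenAlt adj N p) (k : ℕ) (hk : k < p.length) :
    S p[k] ↔ (k % 2 = 0 ↔ S (p.head hp.ne_nil)) := by
  induction k with
  | zero => simp [List.head_eq_getElem]
  | succ k ih =>
    have h1 := ih (by omega)
    have h2 := hS _ _ (hp.adj_succ k hk)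
    have h3 : (k + 1) % 2 = 0 ↔ ¬ k % 2 = 0 := by omega
    tauto

/-- In a bipartite graph, even-length alternating paths extend backwards through a matched edge
followed by an arbitrary edge. -/
lemma EvenAltFrom.extend {S : α → Prop} (hS : ∀ a b, adj a b → (S a ↔ ¬ S b))
    (hadj : ∀ a b, inMatch N a b → adj a b)
    (huniq : ∀ a b c, inMatch N a c → inMatch N b c → a = b)
    {a b y : α} (hby : inMatch N b y) (hya : adj y a) (ha : EvenAltFrom adj N a) :
    EvenAltFrom adj N b := by
  by_cases hyam : inMatch N y a
  · rwa [huniq b a y hby hyam.symm]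
  obtain ⟨p, hp, h, rfl⟩ := evenAltFrom_iff.1 ha
  have hsb := hS _ _ (hadj _ _ hby)
  have hsy := hS _ _ hya
  rw [evenAltFrom_iff]
  by_cases hb : b ∈ p
  · obtain ⟨k, hk, rfl⟩ := List.getElem_of_mem hb
    have hk2 : k % 2 = 0 := by
      have := hp.side_getElem hS k hk
      tauto
    refine ⟨p.drop k, hp.drop hk hk2, (hp.drop hk hk2).ne_nil, ?_⟩
    simp [List.head_eq_getElem]
  have hy : y ∉ p := by
    intro hy
    obtain ⟨k, hk, rfl⟩ := List.getElem_of_mem hy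
    have hk2 : ¬ k % 2 = 0 := by
      have := hp.side_getElem hS k hk
      tauto
    obtain ⟨j, rfl⟩ : ∃ j, k = j + 1 := ⟨k - 1, by omega⟩
    have := huniq b _ _ hby ((hp.inMatch_iff j hk).2 (by omega))
    exact hb (this ▸ List.getElem_mem _)
  have hne : b ≠ y := by
    rintro rfl
    tauto
  refine ⟨b :: y :: p, ⟨by simp, ?_, ?_, ?_, ?_, ?_⟩, by simp, by simp⟩
  · simp [hb, hy, hne, hp.nodup]
  · rintro (_ | _ | i) hi
    · exact hadj _ _ hby
    · simpa [List.head_eq_getElem] using hya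
    · simpa using hp.adj_succ i (by simpa using hi)
  · have := hp.odd_length
    simp only [List.length_cons]
    omega
  · rintro (_ | _ | i) hi
    · simpa using hby
    · simpa [List.head_eq_getElem] using hyam
    · have := hp.inMatch_iff i (by simpa using hi)
      simp only [List.getElem_cons_succ]
      rw [this]
      omega
  · have := hp.last_unmatched
    rwa [List.getLast_cons (by simp), List.getLast_cons h]

end AlternatingPaths

section Egervary

/-- Egerváry's theorem for square matrices with natural entries, in terms of permutations. -/
lemma exists_potential_eq_perm_sum (c : V → V → ℕ) :
    ∃ (a b : V → ℕ) (σ : Equiv.Perm V), (∀ x y, c x y ≤ a x + b y) ∧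
      ∑ x, a x + ∑ y, b y = ∑ x, c x (σ x) := by
  classical
  cases isEmpty_or_nonempty V with
  | inl _ => exact ⟨isEmptyElim, isEmptyElim, 1, isEmptyElim, by simp⟩
  | inr _ =>
  let P : ℕ → Prop := fun n => ∃ a b : V → ℤ, (∀ x y, (c x y : ℤ) ≤ a x + b y) ∧
    ∑ x, a x + ∑ y, b y = n
  have hnonneg : ∀ a b : V → ℤ, (∀ x y, (c x y : ℤ) ≤ a x + b y) →
      0 ≤ ∑ x, a x + ∑ y, b y := by
    intro a b hab
    rw [← Finset.sum_add_distrib]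
    exact Finset.sum_nonneg fun x _ => le_trans (by positivity) (hab x x)
  have hP : ∃ n, P n := by
    let a : V → ℤ := fun x => ∑ y, (c x y : ℤ)
    have hab : ∀ x y, (c x y : ℤ) ≤ a x + (0 : V → ℤ) y := by
      intro x y
      simp only [Pi.zero_apply, add_zero]
      exact Finset.single_le_sum (f := fun y => (c x y : ℤ)) (fun _ _ => by positivity)
        (Finset.mem_univ y)
    exact ⟨_, a, 0, hab, (Int.toNat_of_nonneg (hnonneg _ _ hab)).symm⟩
  obtain ⟨a, b, hab, hsum⟩ := Nat.find_spec hP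
  let t : V → Finset V := fun x => Finset.univ.filter fun y => (c x y : ℤ) = a x + b y
  have hall : ∀ s : Finset V, s.card ≤ (s.biUnion t).card := by
    intro s
    by_contra! hs
    let a' : V → ℤ := fun x => a x - if x ∈ s then 1 else 0
    let b' : V → ℤ := fun y => b y + if y ∈ s.biUnion t then 1 else 0
    have hab' : ∀ x y, (c x y : ℤ) ≤ a' x + b' y := by
      intro x y
      have h1 := hab x y
      by_cases hx : x ∈ s <;> by_cases hy : y ∈ s.biUnion t
      · simp only [a', b', if_pos hx, if_pos hy]; omega
      · have h2 : (c x y : ℤ) ≠ a x + b y := by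
          intro h
          exact hy (Finset.mem_biUnion.2 ⟨x, hx, by simpa [t] using h⟩)
        simp only [a', b', if_pos hx, if_neg hy]; omega
      · simp only [a', b', if_neg hx, if_pos hy]; omega
      · simp only [a', b', if_neg hx, if_neg hy]; omega
    have hsum' : ∑ x, a' x + ∑ y, b' y =
        (∑ x, a x + ∑ y, b y) - s.card + (s.biUnion t).card := by
      have ha' : ∑ x, a' x = ∑ x, a x - s.card := by
        simp only [a', Finset.sum_sub_distrib]
        simp
      have hb' : ∑ y, b' y = ∑ y, b y + (s.biUnion t).card := by
        simp only [b', Finset.sum_add_distrib]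
        rw [Finset.sum_boole, Finset.filter_mem_eq_inter, Finset.univ_inter]
      rw [ha', hb']; ring
    have h0 := hnonneg a' b' hab'
    refine Nat.find_min hP (m := (∑ x, a' x + ∑ y, b' y).toNat) ?_
      ⟨a', b', hab', (Int.toNat_of_nonneg h0).symm⟩
    omega
  obtain ⟨f, hf, hft⟩ := (Finset.all_card_le_biUnion_card_iff_exists_injective t).1 hall
  let σ : Equiv.Perm V := Equiv.ofBijective f (Finite.injective_iff_bijective.1 hf)
  obtain ⟨y₀, hy₀⟩ := Finite.exists_min b
  have ha0 : ∀ x, 0 ≤ a x + b y₀ := fun x => le_trans (by positivity) (hab x y₀)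
  have hb0 : ∀ y, 0 ≤ b y - b y₀ := fun y => sub_nonneg.2 (hy₀ y)
  refine ⟨fun x => (a x + b y₀).toNat, fun y => (b y - b y₀).toNat, σ, ?_, ?_⟩
  · intro x y
    have := hab x y
    have := ha0 x
    have := hb0 y
    simp only
    omega
  · have htight : ∀ x, (c x (σ x) : ℤ) = a x + b (σ x) := fun x => by
      simpa [t, σ] using hft x
    zify
    simp only [Int.toNat_of_nonneg (ha0 _), Int.toNat_of_nonneg (hb0 _), htight,
      Finset.sum_add_distrib, Finset.sum_sub_distrib, Equiv.sum_comp σ b]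
    ring

lemma IsBMatching.mWt_le_mwm {X Y : Finset V} {w : V → V → ℕ} {M : Finset (V × V)}
    (hM : IsBMatching X Y w M) : mWt w M ≤ mwm X Y w := by
  classical
  exact Finset.le_sup (f := fun M => mWt w M) (by simpa using hM)

lemma mwm_le_iff {X Y : Finset V} {w : V → V → ℕ} {n : ℕ} :
    mwm X Y w ≤ n ↔ ∀ M, IsBMatching X Y w M → mWt w M ≤ n := by
  classical
  simp [mwm]

/-- Egerváry's theorem: some cover has weight at most that of a maximum weight matching. -/
lemma exists_cover_sum_le_mwm (X Y : Finset V) (hXY : Disjoint X Y) (w : V → V → ℕ) :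
    ∃ C : V → ℕ, IsCover X Y w C ∧ ∑ v, C v ≤ mwm X Y w := by
  classical
  obtain ⟨a, b, σ, hab, hsum⟩ :=
    exists_potential_eq_perm_sum fun x y => if x ∈ X ∧ y ∈ Y then w x y else 0
  refine ⟨fun v => if v ∈ X then a v else if v ∈ Y then b v else 0, ?_, ?_⟩
  · intro x hx y hy
    have hy' : y ∉ X := fun h => Finset.disjoint_left.1 hXY h hy
    simpa [hx, hy, hy'] using hab x y
  · let A : Finset V := Finset.univ.filter fun x => x ∈ X ∧ σ x ∈ Y ∧ 0 < w x (σ x)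
    have hM : IsBMatching X Y w (A.image fun x => (x, σ x)) := by
      constructor
      · intro e he
        obtain ⟨x, hx, rfl⟩ := Finset.mem_image.1 he
        simpa [A] using hx
      · intro e he f hf hef
        obtain ⟨x, -, rfl⟩ := Finset.mem_image.1 he
        obtain ⟨z, -, rfl⟩ := Finset.mem_image.1 hf
        have hxz : x ≠ z := by rintro rfl; exact hef rfl
        exact ⟨hxz, fun h => hxz (σ.injective h)⟩
    calc _ ≤ ∑ v, (a v + b v) := Finset.sum_le_sum fun v _ => by split_ifs <;> omega
      _ = ∑ x, if x ∈ X ∧ σ x ∈ Y then w x (σ x) else 0 := by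
        rw [Finset.sum_add_distrib, hsum]
      _ ≤ mWt w (A.image fun x => (x, σ x)) := by
        rw [mWt, Finset.sum_image (by intro x _ z _ h; exact congrArg Prod.fst h),
          Finset.sum_filter]
        refine Finset.sum_le_sum fun x _ => ?_
        by_cases h : x ∈ X ∧ σ x ∈ Y
        · rcases Nat.eq_zero_or_pos (w x (σ x)) with h0 | h0 <;> simp [h, h0]
        · simp [h]
      _ ≤ mwm X Y w := hM.mWt_le_mwm

end Egervary

section Matchings

variable {X Y : Finset V} {w : V → V → ℕ} {M : Finset (V × V)}

open Classical in
lemma IsBMatching.sum_ends (hXY : Disjoint X Y) (hM : IsBMatching X Y w M) (C : V → ℕ) :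
    ∑ e ∈ M, (C e.1 + C e.2) = ∑ v with matchedBy M v, C v := by
  have hinj1 : Set.InjOn Prod.fst (M : Set (V × V)) := fun e he f hf h => by
    by_contra hne
    exact (hM.2 e he f hf hne).1 h
  have hinj2 : Set.InjOn Prod.snd (M : Set (V × V)) := fun e he f hf h => by
    by_contra hne
    exact (hM.2 e he f hf hne).2 h
  have hdisj : Disjoint (M.image Prod.fst) (M.image Prod.snd) := by
    rw [Finset.disjoint_left]
    intro v h1 h2
    obtain ⟨e, he, rfl⟩ := Finset.mem_image.1 h1
    obtain ⟨f, hf, hfe⟩ := Finset.mem_image.1 h2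
    exact Finset.disjoint_left.1 hXY (hM.1 e he).1 (hfe ▸ (hM.1 f hf).2.1)
  have hset : (Finset.univ.filter fun v => matchedBy M v) =
      M.image Prod.fst ∪ M.image Prod.snd := by
    ext v
    simp only [Finset.mem_union, Finset.mem_image, matchedBy]
    grind
  rw [hset, Finset.sum_union hdisj, Finset.sum_image hinj1, Finset.sum_image hinj2,
    Finset.sum_add_distrib]

open Classical in
lemma IsBMatching.mWt_le_sum (hXY : Disjoint X Y) (hM : IsBMatching X Y w M) {C : V → ℕ}
    (hC : IsCover X Y w C) : mWt w M ≤ ∑ v, C v :=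
  calc mWt w M ≤ ∑ e ∈ M, (C e.1 + C e.2) :=
        Finset.sum_le_sum fun e he => hC _ (hM.1 e he).1 _ (hM.1 e he).2.1
    _ = ∑ v with matchedBy M v, C v := hM.sum_ends hXY C
    _ ≤ ∑ v, C v := Finset.sum_le_sum_of_subset (Finset.filter_subset _ _)

/-- Complementary slackness for matched edges. -/
lemma IsBMatching.tight (hXY : Disjoint X Y) (hM : IsBMatching X Y w M) {C : V → ℕ}
    (hC : IsCover X Y w C) (hopt : ∑ v, C v ≤ mWt w M) {e : V × V} (he : e ∈ M) :
    C e.1 + C e.2 = w e.1 e.2 := by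
  classical
  have hle : ∀ e ∈ M, w e.1 e.2 ≤ C e.1 + C e.2 :=
    fun e he => hC _ (hM.1 e he).1 _ (hM.1 e he).2.1
  have hsum : ∑ e ∈ M, (C e.1 + C e.2) ≤ ∑ e ∈ M, w e.1 e.2 := by
    rw [hM.sum_ends hXY C]
    exact (Finset.sum_le_sum_of_subset (Finset.filter_subset _ _)).trans hopt
  exact ((Finset.sum_eq_sum_iff_of_le hle).1
    (le_antisymm (Finset.sum_le_sum hle) hsum) e he).symm

/-- Complementary slackness for unmatched nodes. -/
lemma IsBMatching.eq_zero_of_not_matchedBy (hXY : Disjoint X Y) (hM : IsBMatching X Y w M)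
    {C : V → ℕ} (hC : IsCover X Y w C) (hopt : ∑ v, C v ≤ mWt w M) {v : V}
    (hv : ¬ matchedBy M v) : C v = 0 := by
  classical
  have h1 : mWt w M ≤ ∑ v with matchedBy M v, C v := by
    rw [← hM.sum_ends hXY C]
    exact Finset.sum_le_sum fun e he => hC _ (hM.1 e he).1 _ (hM.1 e he).2.1
  have h2 := Finset.sum_filter_add_sum_filter_not Finset.univ (fun v => matchedBy M v) C
  have h3 : C v ≤ ∑ v with ¬ matchedBy M v, C v :=
    Finset.single_le_sum (f := C) (fun _ _ => Nat.zero_le _) (by simpa using hv)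
  omega

lemma IsBMatching.inMatch_unique (hXY : Disjoint X Y) (hM : IsBMatching X Y w M) {a b c : V}
    (ha : inMatch M a c) (hb : inMatch M b c) : a = b := by
  have hd : ∀ v, v ∈ X → v ∈ Y → False := fun v h h' => Finset.disjoint_left.1 hXY h h'
  rcases ha with ha | ha <;> rcases hb with hb | hb
  · by_contra h
    exact (hM.2 _ ha _ hb (by simp [h])).2 rfl
  · exact (hd c (hM.1 _ hb).1 (hM.1 _ ha).2.1).elim
  · exact (hd c (hM.1 _ ha).1 (hM.1 _ hb).2.1).elim
  · by_contra h
    exact (hM.2 _ ha _ hb (by simp [h])).1 rfl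

/-- The weight function of the bipartite graph, made symmetric and zero off the edges. -/
def symWt (X Y : Finset V) (w : V → V → ℕ) (a b : V) : ℕ :=
  if a ∈ X ∧ b ∈ Y then w a b else if b ∈ X ∧ a ∈ Y then w b a else 0

lemma symWt_comm (hXY : Disjoint X Y) (a b : V) : symWt X Y w a b = symWt X Y w b a := by
  have := Finset.disjoint_left.1 hXY
  grind [symWt]

lemma symWt_of_mem {a b : V} (ha : a ∈ X) (hb : b ∈ Y) : symWt X Y w a b = w a b := by
  simp [symWt, ha, hb]

lemma symWt_le_alphaCopies (a b : V) : symWt X Y w a b ≤ alphaCopies X Y w a := by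
  have key : b ∈ X ∪ Y → max (w a b) (w b a) ≤ alphaCopies X Y w a := fun hb =>
    Finset.le_sup (f := fun v => max (w a v) (w v a)) hb
  unfold symWt
  split_ifs with h1 h2
  · exact (le_max_left _ _).trans (key (Finset.mem_union_right _ h1.2))
  · exact (le_max_right _ _).trans (key (Finset.mem_union_left _ h2.1))
  · exact Nat.zero_le _

lemma IsCover.symWt_le {C : V → ℕ} (hC : IsCover X Y w C) (a b : V) :
    symWt X Y w a b ≤ C a + C b := by
  unfold symWt
  split_ifs with h1 h2
  · exact hC _ h1.1 _ h1.2
  · rw [add_comm]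
    exact hC _ h2.1 _ h2.2
  · exact Nat.zero_le _

lemma phiAdj_iff (hXY : Disjoint X Y) {a b : V × ℕ} : phiAdj X Y w a b ↔
    1 ≤ a.2 ∧ 1 ≤ b.2 ∧ a.2 + b.2 = symWt X Y w a.1 b.1 + 1 := by
  have := Finset.disjoint_left.1 hXY
  unfold phiAdj symWt
  grind

lemma mem_phiM (hM : IsBMatching X Y w M) {a b : V × ℕ} : (a, b) ∈ phiM w M ↔
    (a.1, b.1) ∈ M ∧ 1 ≤ a.2 ∧ 1 ≤ b.2 ∧ a.2 + b.2 = symWt X Y w a.1 b.1 + 1 := by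
  obtain ⟨a, i⟩ := a
  obtain ⟨b, j⟩ := b
  simp only [phiM, Finset.mem_biUnion, Finset.mem_image, Finset.mem_Icc, Prod.mk.injEq]
  constructor
  · rintro ⟨⟨x, y⟩, he, k, hk, ⟨rfl, rfl⟩, rfl, rfl⟩
    rw [symWt_of_mem (hM.1 _ he).1 (hM.1 _ he).2.1]
    exact ⟨he, by omega, by simp only at hk ⊢; omega, by simp only at hk ⊢; omega⟩
  · rintro ⟨he, hi, hj, hij⟩
    rw [symWt_of_mem (hM.1 _ he).1 (hM.1 _ he).2.1] at hij
    exact ⟨_, he, i, ⟨hi, by simp only at hij ⊢; omega⟩, ⟨rfl, rfl⟩, rfl,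
      by simp only at hij ⊢; omega⟩

lemma inMatch_phiM (hXY : Disjoint X Y) (hM : IsBMatching X Y w M) {a b : V × ℕ} :
    inMatch (phiM w M) a b ↔
      inMatch M a.1 b.1 ∧ 1 ≤ a.2 ∧ 1 ≤ b.2 ∧ a.2 + b.2 = symWt X Y w a.1 b.1 + 1 := by
  unfold inMatch
  rw [mem_phiM hM, mem_phiM hM, symWt_comm hXY b.1 a.1, add_comm b.2]
  tauto

lemma matchedBy_phiM (hXY : Disjoint X Y) (hM : IsBMatching X Y w M) {a : V × ℕ} :
    matchedBy (phiM w M) a ↔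
      ∃ v, inMatch M a.1 v ∧ 1 ≤ a.2 ∧ a.2 ≤ symWt X Y w a.1 v := by
  rw [matchedBy_iff_exists_inMatch]
  constructor
  · rintro ⟨b, hb⟩
    obtain ⟨h1, h2, h3, h4⟩ := (inMatch_phiM hXY hM).1 hb
    exact ⟨b.1, h1, h2, by omega⟩
  · rintro ⟨v, h1, h2, h3⟩
    exact ⟨(v, symWt X Y w a.1 v + 1 - a.2),
      (inMatch_phiM hXY hM).2 ⟨h1, h2, by simp only; omega, by simp only; omega⟩⟩

/-- A copy of a node whose index is at most the value of an optimal cover at that node starts no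
even-length alternating path. -/
lemma IsBMatching.not_evenAltFrom_of_le_cover (hXY : Disjoint X Y) (hM : IsBMatching X Y w M)
    {C : V → ℕ} (hC : IsCover X Y w C) (hopt : ∑ v, C v ≤ mWt w M) {a : V × ℕ}
    (ha1 : 1 ≤ a.2) (ha : a.2 ≤ C a.1) :
    ¬ EvenAltFrom (phiAdj X Y w) (phiM w M) a := by
  have htight : ∀ a b, inMatch M a b → C a + C b = symWt X Y w a b := by
    rintro a b (h | h)
    · rw [symWt_of_mem (hM.1 _ h).1 (hM.1 _ h).2.1]
      exact hM.tight hXY hC hopt h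
    · rw [symWt_comm hXY, symWt_of_mem (hM.1 _ h).1 (hM.1 _ h).2.1, add_comm]
      exact hM.tight hXY hC hopt h
  refine not_evenAltFrom_of_cover (D := fun a => 1 ≤ a.2 ∧ a.2 ≤ C a.1) ?_ ?_ ?_ ⟨ha1, ha⟩
  · intro a b h
    obtain ⟨h1, h2, h3⟩ := (phiAdj_iff hXY).1 h
    have := hC.symWt_le a.1 b.1
    by_contra! hcon
    have := hcon.1 h1
    have := hcon.2 h2
    omega
  · intro a b h hDa hDb
    obtain ⟨h0, h1, h2, h3⟩ := (inMatch_phiM hXY hM).1 h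
    have := htight _ _ h0
    omega
  · intro a hDa
    have hmat : matchedBy M a.1 := by
      by_contra h
      have := hM.eq_zero_of_not_matchedBy hXY hC hopt h
      omega
    obtain ⟨v, hv⟩ := matchedBy_iff_exists_inMatch.1 hmat
    have := htight _ _ hv
    exact (matchedBy_phiM hXY hM).2 ⟨v, hv, hDa.1, by omega⟩

/-- A copy adjacent to the start of an even-length alternating path is matched. -/
lemma IsBMatching.matchedBy_of_phiAdj_evenAltFrom (hXY : Disjoint X Y)
    (hM : IsBMatching X Y w M) {C : V → ℕ} (hC : IsCover X Y w C)
    (hopt : ∑ v, C v ≤ mWt w M) {a b : V × ℕ} (hab : phiAdj X Y w a b)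
    (hb : EvenAltFrom (phiAdj X Y w) (phiM w M) b) : matchedBy (phiM w M) a := by
  by_contra ha
  obtain ⟨h1, h2, h3⟩ := (phiAdj_iff hXY).1 hab
  have hCa : ¬ a.2 ≤ C a.1 := fun h =>
    hM.not_evenAltFrom_of_le_cover hXY hC hopt h1 h (evenAltFrom_of_not_matchedBy ha)
  have hCb : ¬ b.2 ≤ C b.1 := fun h => hM.not_evenAltFrom_of_le_cover hXY hC hopt h2 h hb
  have := hC.symWt_le a.1 b.1
  omega

lemma IsBMatching.evenAltFrom_extend (hXY : Disjoint X Y) (hM : IsBMatching X Y w M)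
    {S : Finset V} (hS : ∀ a b, 0 < symWt X Y w a b → (a ∈ S ↔ b ∉ S)) {a b y : V × ℕ}
    (hby : inMatch (phiM w M) b y) (hya : phiAdj X Y w y a)
    (ha : EvenAltFrom (phiAdj X Y w) (phiM w M) a) :
    EvenAltFrom (phiAdj X Y w) (phiM w M) b := by
  refine EvenAltFrom.extend (S := fun a => a.1 ∈ S) ?_ ?_ ?_ hby hya ha
  · intro a b h
    have := (phiAdj_iff hXY).1 h
    exact hS _ _ (by omega)
  · intro a b h
    exact (phiAdj_iff hXY).2 ((inMatch_phiM hXY hM).1 h).2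
  · intro a b c hac hbc
    obtain ⟨ha0, ha⟩ := (inMatch_phiM hXY hM).1 hac
    obtain ⟨hb0, hb⟩ := (inMatch_phiM hXY hM).1 hbc
    have h1 := hM.inMatch_unique hXY ha0 hb0
    rw [h1] at ha
    exact Prod.ext h1 (by omega)

/-- There is an optimal cover whose value at `u` is at least the loss in matching weight caused by
deleting `u`. -/
lemma exists_cover_deletion_le (hXY : Disjoint X Y) (u : V) :
    ∃ C : V → ℕ, IsCover X Y w C ∧ ∑ v, C v ≤ mwm X Y w ∧
      mwm X Y w - mwm X Y (fun x y => if x = u ∨ y = u then 0 else w x y) ≤ C u := by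
  set wd : V → V → ℕ := fun x y => if x = u ∨ y = u then 0 else w x y with hwd
  have hdel : mwm X Y wd ≤ mwm X Y w := by
    rw [mwm_le_iff]
    intro M hM
    have hle : ∀ x y, wd x y ≤ w x y := fun x y => by simp only [hwd]; split_ifs <;> omega
    exact (Finset.sum_le_sum fun e _ => hle e.1 e.2).trans
      (IsBMatching.mWt_le_mwm ⟨fun e he => ⟨(hM.1 e he).1, (hM.1 e he).2.1,
        (hM.1 e he).2.2.trans_le (hle _ _)⟩, hM.2⟩)
  set t := mwm X Y w - mwm X Y wd with ht
  let wt : V → V → ℕ := fun x y => if x = u ∨ y = u then w x y - t else w x y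
  have hwt : mwm X Y wt ≤ mwm X Y wd := by
    rw [mwm_le_iff]
    intro M hM
    have hle : ∀ x y, wt x y ≤ w x y := fun x y => by simp only [wt]; split_ifs <;> omega
    by_cases hu : ∃ e ∈ M, e.1 = u ∨ e.2 = u
    · obtain ⟨e, he, heu⟩ := hu
      have hMw : IsBMatching X Y w M := ⟨fun e he => ⟨(hM.1 e he).1, (hM.1 e he).2.1,
        (hM.1 e he).2.2.trans_le (hle _ _)⟩, hM.2⟩
      have h1 := hMw.mWt_le_mwm
      have h2 : mWt wt M + t ≤ mWt w M := by
        unfold mWt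
        rw [← Finset.add_sum_erase _ _ he, ← Finset.add_sum_erase M (fun e => w e.1 e.2) he]
        have h3 : ∑ f ∈ M.erase e, wt f.1 f.2 ≤ ∑ f ∈ M.erase e, w f.1 f.2 :=
          Finset.sum_le_sum fun f _ => hle _ _
        have h4 : wt e.1 e.2 = w e.1 e.2 - t := if_pos heu
        have h5 := (hM.1 e he).2.2
        omega
      omega
    · have heq : ∀ e ∈ M, wt e.1 e.2 = wd e.1 e.2 := by
        intro e he
        have hne : ¬ (e.1 = u ∨ e.2 = u) := fun h => hu ⟨e, he, h⟩
        simp only [wt, hwd, if_neg hne]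
      rw [mWt, Finset.sum_congr rfl heq]
      exact IsBMatching.mWt_le_mwm ⟨fun e he => ⟨(hM.1 e he).1, (hM.1 e he).2.1,
        heq e he ▸ (hM.1 e he).2.2⟩, hM.2⟩
  obtain ⟨C, hC, hsum⟩ := exists_cover_sum_le_mwm X Y hXY wt
  refine ⟨fun v => C v + if v = u then t else 0, ?_, ?_, by simp⟩
  · intro x hx y hy
    have := hC x hx y hy
    simp only [wt] at this
    grind
  · rw [Finset.sum_add_distrib, Finset.sum_ite_eq' Finset.univ u, if_pos (Finset.mem_univ _)]
    omega

end Matchings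

section Cavity

variable {X Y : Finset V} {w : V → V → ℕ} {M : Finset (V × V)}

open Classical in
/-- The node weights counting the copies in the vertex cover of the unfolded graph which consists
of the copies on side `S` starting no even-length alternating path, and the copies on the other
side adjacent to a copy starting such a path. -/
noncomputable def evenAltCover (X Y : Finset V) (w : V → V → ℕ) (M : Finset (V × V))
    (S : Finset V) (v : V) : ℕ :=
  if v ∈ S then
    #{i ∈ Finset.Icc 1 (alphaCopies X Y w v) |
      ¬ EvenAltFrom (phiAdj X Y w) (phiM w M) (v, i)}
  else
    #{i ∈ Finset.Icc 1 (alphaCopies X Y w v) |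
      ∃ a, phiAdj X Y w (v, i) a ∧ EvenAltFrom (phiAdj X Y w) (phiM w M) a}

lemma symWt_le_evenAltCover (hXY : Disjoint X Y) {S : Finset V} {s o : V} (hs : s ∈ S)
    (ho : o ∉ S) :
    symWt X Y w s o ≤ evenAltCover X Y w M S s + evenAltCover X Y w M S o := by
  classical
  have hβs := symWt_le_alphaCopies (X := X) (Y := Y) (w := w) s o
  have hβo := symWt_le_alphaCopies (X := X) (Y := Y) (w := w) o s
  rw [symWt_comm hXY o s] at hβo
  set β := symWt X Y w s o with hβ
  have hsplit := Finset.card_filter_add_card_filter_not (s := Finset.Icc 1 β)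
    (fun i => EvenAltFrom (phiAdj X Y w) (phiM w M) (s, i))
  rw [Nat.card_Icc] at hsplit
  rw [evenAltCover, if_pos hs, evenAltCover, if_neg ho]
  have h1 : #{i ∈ Finset.Icc 1 β | ¬ EvenAltFrom (phiAdj X Y w) (phiM w M) (s, i)} ≤
      #{i ∈ Finset.Icc 1 (alphaCopies X Y w s) |
        ¬ EvenAltFrom (phiAdj X Y w) (phiM w M) (s, i)} :=
    Finset.card_le_card (Finset.filter_subset_filter _ (Finset.Icc_subset_Icc_right hβs))
  have h2 : #{i ∈ Finset.Icc 1 β | EvenAltFrom (phiAdj X Y w) (phiM w M) (s, i)} ≤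
      #{i ∈ Finset.Icc 1 (alphaCopies X Y w o) |
        ∃ a, phiAdj X Y w (o, i) a ∧ EvenAltFrom (phiAdj X Y w) (phiM w M) a} := by
    refine Finset.card_le_card_of_injOn (fun i => β + 1 - i) ?_ ?_
    · intro i hi
      simp only [Finset.coe_filter, Finset.mem_Icc, Set.mem_ofPred_eq] at hi ⊢
      refine ⟨by omega, (s, i), ?_, hi.2⟩
      rw [phiAdj_iff hXY, symWt_comm hXY]
      simp only
      omega
    · intro i hi j hj hij
      simp only [Finset.coe_filter, Finset.mem_Icc, Set.mem_ofPred_eq] at hi hj hij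
      omega
  omega

lemma IsBMatching.evenAltCover_add_le (hXY : Disjoint X Y) (hM : IsBMatching X Y w M)
    {C : V → ℕ} (hC : IsCover X Y w C) (hopt : ∑ v, C v ≤ mWt w M) {S : Finset V}
    (hS : ∀ a b, 0 < symWt X Y w a b → (a ∈ S ↔ b ∉ S)) {s o : V} (hs : s ∈ S) (ho : o ∉ S)
    (hso : inMatch M s o) :
    evenAltCover X Y w M S s + evenAltCover X Y w M S o ≤ symWt X Y w s o := by
  classical
  set β := symWt X Y w s o with hβ
  have hsplit := Finset.card_filter_add_card_filter_not (s := Finset.Icc 1 β)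
    (fun i => EvenAltFrom (phiAdj X Y w) (phiM w M) (s, i))
  rw [Nat.card_Icc] at hsplit
  rw [evenAltCover, if_pos hs, evenAltCover, if_neg ho]
  have h1 : #{i ∈ Finset.Icc 1 (alphaCopies X Y w s) |
        ¬ EvenAltFrom (phiAdj X Y w) (phiM w M) (s, i)} ≤
      #{i ∈ Finset.Icc 1 β | ¬ EvenAltFrom (phiAdj X Y w) (phiM w M) (s, i)} := by
    refine Finset.card_le_card fun i hi => ?_
    simp only [Finset.mem_filter, Finset.mem_Icc] at hi ⊢
    have hmat := not_imp_comm.1 evenAltFrom_of_not_matchedBy hi.2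
    obtain ⟨v, hv, -, hvi⟩ := (matchedBy_phiM hXY hM).1 hmat
    obtain rfl := hM.inMatch_unique hXY hv.symm hso.symm
    exact ⟨⟨hi.1.1, hvi⟩, hi.2⟩
  have h2 : #{i ∈ Finset.Icc 1 (alphaCopies X Y w o) |
        ∃ a, phiAdj X Y w (o, i) a ∧ EvenAltFrom (phiAdj X Y w) (phiM w M) a} ≤
      #{i ∈ Finset.Icc 1 β | EvenAltFrom (phiAdj X Y w) (phiM w M) (s, i)} := by
    have key : ∀ j, (∃ a, phiAdj X Y w (o, j) a ∧
        EvenAltFrom (phiAdj X Y w) (phiM w M) a) → 1 ≤ j ∧ j ≤ β ∧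
        EvenAltFrom (phiAdj X Y w) (phiM w M) (s, β + 1 - j) := by
      rintro j ⟨a, hja, ha⟩
      have hmat := hM.matchedBy_of_phiAdj_evenAltFrom hXY hC hopt hja ha
      obtain ⟨v, hv, hj, hvj⟩ := (matchedBy_phiM hXY hM).1 hmat
      obtain rfl := hM.inMatch_unique hXY hv.symm hso
      simp only at hj hvj
      rw [symWt_comm hXY] at hvj
      refine ⟨hj, hvj, hM.evenAltFrom_extend hXY hS (y := (o, j)) ?_ hja ha⟩
      rw [inMatch_phiM hXY hM]
      exact ⟨hso, by simp only; omega, hj, by simp only; omega⟩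
    refine Finset.card_le_card_of_injOn (fun i => β + 1 - i) ?_ ?_
    · intro j hj
      simp only [Finset.coe_filter, Finset.mem_Icc, Set.mem_ofPred_eq] at hj ⊢
      obtain ⟨h1, h2, h3⟩ := key j hj.2
      exact ⟨by omega, h3⟩
    · intro i hi j hj hij
      simp only [Finset.coe_filter, Finset.mem_Icc, Set.mem_ofPred_eq] at hi hj hij
      have := key i hi.2
      have := key j hj.2
      omega
  omega

lemma IsBMatching.evenAltCover_eq_zero (hXY : Disjoint X Y) (hM : IsBMatching X Y w M)
    {C : V → ℕ} (hC : IsCover X Y w C) (hopt : ∑ v, C v ≤ mWt w M) (S : Finset V) {v : V}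
    (hv : ¬ matchedBy M v) : evenAltCover X Y w M S v = 0 := by
  classical
  have hunm : ∀ i, ¬ matchedBy (phiM w M) (v, i) := by
    intro i h
    obtain ⟨x, hx, -⟩ := (matchedBy_phiM hXY hM).1 h
    exact hv (matchedBy_iff_exists_inMatch.2 ⟨x, hx⟩)
  unfold evenAltCover
  split_ifs
  · rw [Finset.card_eq_zero, Finset.filter_eq_empty_iff]
    exact fun i _ h => h (evenAltFrom_of_not_matchedBy (hunm i))
  · rw [Finset.card_eq_zero, Finset.filter_eq_empty_iff]
    rintro i - ⟨a, hia, ha⟩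
    exact hunm i (hM.matchedBy_of_phiAdj_evenAltFrom hXY hC hopt hia ha)

lemma IsBMatching.sum_evenAltCover_le (hXY : Disjoint X Y) (hM : IsBMatching X Y w M)
    {C : V → ℕ} (hC : IsCover X Y w C) (hopt : ∑ v, C v ≤ mWt w M) {S : Finset V}
    (hS : ∀ a b, 0 < symWt X Y w a b → (a ∈ S ↔ b ∉ S)) :
    ∑ v, evenAltCover X Y w M S v ≤ mWt w M := by
  classical
  have h1 : ∑ v, evenAltCover X Y w M S v =
      ∑ v with matchedBy M v, evenAltCover X Y w M S v := by
    rw [Finset.sum_filter]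
    refine Finset.sum_congr rfl fun v _ => ?_
    split_ifs with h
    · rfl
    · exact hM.evenAltCover_eq_zero hXY hC hopt S h
  rw [h1, ← hM.sum_ends hXY]
  refine Finset.sum_le_sum fun e he => ?_
  obtain ⟨hx, hy, hpos⟩ := hM.1 e he
  rw [← symWt_of_mem (w := w) hx hy] at hpos ⊢
  have hside := hS _ _ hpos
  by_cases hs : e.1 ∈ S
  · exact hM.evenAltCover_add_le hXY hC hopt hS hs (hside.1 hs) (Or.inl he)
  · rw [add_comm, symWt_comm hXY]
    exact hM.evenAltCover_add_le hXY hC hopt hS (by tauto) hs (Or.inr he)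

lemma isCover_evenAltCover (hXY : Disjoint X Y) {S : Finset V}
    (hS : ∀ a b, 0 < symWt X Y w a b → (a ∈ S ↔ b ∉ S)) :
    IsCover X Y w (evenAltCover X Y w M S) := by
  intro x hx y hy
  rw [← symWt_of_mem (w := w) hx hy]
  rcases Nat.eq_zero_or_pos (symWt X Y w x y) with h0 | hpos
  · omega
  have hside := hS _ _ hpos
  by_cases hs : x ∈ S
  · exact symWt_le_evenAltCover hXY hs (hside.1 hs)
  · rw [add_comm, symWt_comm hXY]
    exact symWt_le_evenAltCover hXY (by tauto) hs

end Cavity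

open Classical in
/-- All-cavity formula: with `ρ(u^i) = 0` if an even-length alternating path for
`φ(M)` starts at `u^i` and `ρ(u^i) = 1` otherwise,
`Σ_{1 ≤ i ≤ β} ρ(u^i) = mwm(G) - mwm(G - {u})`. -/
theorem cavity_formula
    (X Y : Finset V) (hXY : Disjoint X Y) (w : V → V → ℕ)
    (hisoX : ∀ x ∈ X, ∃ y ∈ Y, 0 < w x y)
    (hisoY : ∀ y ∈ Y, ∃ x ∈ X, 0 < w x y)
    (M : Finset (V × V)) (hM : IsBMatching X Y w M)
    (hMmax : ∀ M' : Finset (V × V), IsBMatching X Y w M' → mWt w M' ≤ mWt w M)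
    (u : V) (hu : u ∈ X ∪ Y) :
    (∑ i ∈ Finset.Icc 1 (alphaCopies X Y w u),
        if EvenAltFrom (phiAdj X Y w) (phiM w M) (u, i) then 0 else 1) =
      mwm X Y w - mwm X Y (fun x y => if x = u ∨ y = u then 0 else w x y) := by
  obtain ⟨C, hC, hsum, hCu⟩ := exists_cover_deletion_le (w := w) hXY u
  have hmwm : mwm X Y w = mWt w M := le_antisymm (mwm_le_iff.2 hMmax) hM.mWt_le_mwm
  have hopt : ∑ v, C v ≤ mWt w M := hmwm ▸ hsum
  obtain ⟨S, hSu, hS⟩ : ∃ S : Finset V, u ∈ S ∧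
      ∀ a b, 0 < symWt X Y w a b → (a ∈ S ↔ b ∉ S) := by
    have hd := Finset.disjoint_left.1 hXY
    rcases Finset.mem_union.1 hu with h | h
    · exact ⟨X, h, by grind [symWt]⟩
    · exact ⟨Y, h, by grind [symWt]⟩
  have hcount : (∑ i ∈ Finset.Icc 1 (alphaCopies X Y w u),
      if EvenAltFrom (phiAdj X Y w) (phiM w M) (u, i) then 0 else 1) =
      evenAltCover X Y w M S u := by
    rw [evenAltCover, if_pos hSu, Finset.card_filter]
    exact Finset.sum_congr rfl fun i _ => by rw [ite_not]
  rw [hcount]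
  apply le_antisymm
  · have hle := hM.sum_evenAltCover_le hXY hC hopt hS
    rw [← Finset.add_sum_erase _ _ (Finset.mem_univ u), ← hmwm] at hle
    have hdel : mwm X Y (fun x y => if x = u ∨ y = u then 0 else w x y) ≤
        ∑ v ∈ Finset.univ.erase u, evenAltCover X Y w M S v := by
      rw [mwm_le_iff]
      intro M' hM'
      have hcov : IsCover X Y (fun x y => if x = u ∨ y = u then 0 else w x y)
          (fun v => if v = u then 0 else evenAltCover X Y w M S v) := by
        intro x hx y hy
        have := isCover_evenAltCover (M := M) hXY hS x hx y hy
        grind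
      refine (hM'.mWt_le_sum hXY hcov).trans (le_of_eq ?_)
      rw [← Finset.add_sum_erase _ _ (Finset.mem_univ u), if_pos rfl, zero_add]
      exact Finset.sum_congr rfl fun v hv => if_neg (Finset.ne_of_mem_erase hv)
    omega
  · refine hCu.trans ?_
    have hCα : C u ≤ alphaCopies X Y w u := by
      by_cases hmat : matchedBy M u
      · obtain ⟨e, he, heu⟩ := hmat
        obtain ⟨hx, hy, -⟩ := hM.1 e he
        have htight := hM.tight hXY hC hopt he
        rw [← symWt_of_mem (w := w) hx hy] at htight
        rcases heu with rfl | rfl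
        · have := symWt_le_alphaCopies (X := X) (Y := Y) (w := w) e.1 e.2
          omega
        · have := symWt_le_alphaCopies (X := X) (Y := Y) (w := w) e.2 e.1
          rw [symWt_comm hXY] at this
          omega
      · rw [hM.eq_zero_of_not_matchedBy hXY hC hopt hmat]
        exact Nat.zero_le _
    rw [evenAltCover, if_pos hSu]
    calc C u = #(Finset.Icc 1 (C u)) := by simp
      _ ≤ _ := Finset.card_le_card fun i hi => by
        rw [Finset.mem_Icc] at hi
        rw [Finset.mem_filter, Finset.mem_Icc]
        exact ⟨⟨hi.1, hi.2.trans hCα⟩,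
          hM.not_evenAltFrom_of_le_cover hXY hC hopt hi.1 hi.2⟩
end
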